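/- arXiv:2506.06468 — 2 statements merged into one kernel-verified Lean document; each statement's English description precedes it below -/
import Mathlib

section
/- Let ρ be the density of states of the Laplacian on ℤ^d, d ≥ 2, defined by ∫ f(σ) ρ(σ) dσ = (2π)^{-d} ∫_{𝕋^d} f(ω(ξ)) dξ for continuous f, where ω(ξ) = ∑ 2cos(ξ_j). Then ρ is supported on [-2d, 2d], for d ≥ 3 it is bounded: ρ(σ) ≤ C, for d = 2 it satisfies ρ(σ) ≤ C(1 + log(1/|σ|)), and for every ε > 0 there is c_ε > 0 with ρ(σ) ≥ c_ε on [-2d+ε, 2d-ε]. -/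
open MeasureTheory

noncomputable section

instance : Fact (0 < 2 * Real.pi) := ⟨by positivity⟩

noncomputable instance : MeasureTheory.MeasureSpace Real.Angle :=
  inferInstanceAs (MeasureTheory.MeasureSpace (AddCircle (2 * Real.pi)))

/-- The d-dimensional torus `𝕋^d = (ℝ/2πℤ)^d`. -/
abbrev Torus (d : ℕ) := Fin d → Real.Angle

/-- The symbol of the lattice Laplacian, `ω(ξ) = ∑_j 2 cos ξ_j`. -/
noncomputable def omegaT {d : ℕ} (ξ : Torus d) : ℝ := ∑ j, 2 * (ξ j).cos

/-!
For `x` uniform on the circle, `2 cos x` has the arcsine density. The coordinates being independent,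
the law of `ω` has as density the `d`-fold convolution power of the arcsine density, which gives the
support and, by averaging over small intervals, the positivity inside it. The arcsine density has
only inverse square root singularities, so it lies in `L^p` for `p < 2`; since `3 * (2/3) = 2`,
Young's inequality with the three exponents `3/2` bounds the triple convolution, and further
convolutions with an integrable function preserve this bound. With two factors there is a
non-integrable collision of poles only as `σ → 0`, where the poles `±2` of one factor come within
`|σ|` of the poles `σ ± 2` of the other; cutting `1/v` off at distance `|σ|` leaves a logarithm.
-/

open ENNReal Set

section Convolution

variable {G : Type*} [MeasurableSpace G]

/-- The convolution power `f ⋆ ⋯ ⋆ f` with `n + 1` factors. The index is shifted because no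
function is a unit for convolution. -/
def convPow [Add G] [Neg G] (f : G → ℝ≥0∞) (μ : Measure G) : ℕ → G → ℝ≥0∞
  | 0 => f
  | n + 1 => f ⋆ₗ[μ] convPow f μ n

lemma mul_measure_le_lconvolution [AddGroup G] {f g : G → ℝ≥0∞} {μ : Measure G} {s : Set G}
    (hs : MeasurableSet s) {a b : ℝ≥0∞} {x : G} (hf : ∀ y ∈ s, a ≤ f y)
    (hg : ∀ y ∈ s, b ≤ g (-y + x)) : a * b * μ s ≤ (f ⋆ₗ[μ] g) x :=
  calc a * b * μ s = ∫⁻ _ in s, a * b ∂μ := (setLIntegral_const s _).symm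
    _ ≤ ∫⁻ y in s, f y * g (-y + x) ∂μ :=
        setLIntegral_mono' hs fun y hy ↦ mul_le_mul' (hf y hy) (hg y hy)
    _ ≤ (f ⋆ₗ[μ] g) x := setLIntegral_le_lintegral _ _

lemma lconvolution_le_lintegral_mul [AddGroup G] {f g : G → ℝ≥0∞} {μ : Measure G}
    (hf : Measurable f) {M : ℝ≥0∞} (hg : ∀ x, g x ≤ M) (x : G) :
    (f ⋆ₗ[μ] g) x ≤ (∫⁻ y, f y ∂μ) * M := by
  rw [← lintegral_mul_const _ hf]
  exact lintegral_mono fun y ↦ mul_le_mul_right (hg _) _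

section Group

variable [AddGroup G] [MeasurableAdd₂ G] [MeasurableNeg G] {μ : Measure G} [SFinite μ]
  {f g : G → ℝ≥0∞}

lemma measurable_convPow (hf : Measurable f) (n : ℕ) : Measurable (convPow f μ n) := by
  induction n with
  | zero => exact hf
  | succ n ih => exact measurable_lconvolution μ hf ih

lemma lintegral_lconvolution [μ.IsAddLeftInvariant] (hf : Measurable f) (hg : Measurable g) :
    ∫⁻ x, (f ⋆ₗ[μ] g) x ∂μ = (∫⁻ x, f x ∂μ) * ∫⁻ x, g x ∂μ := by
  simp only [lconvolution_def]
  rw [lintegral_lintegral_swap (by fun_prop), ← lintegral_mul_const _ hf]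
  refine lintegral_congr fun y ↦ ?_
  rw [lintegral_const_mul _ (by fun_prop), lintegral_add_left_eq_self]

lemma lintegral_convPow [μ.IsAddLeftInvariant] (hf : Measurable f) (n : ℕ) :
    ∫⁻ x, convPow f μ n x ∂μ = (∫⁻ x, f x ∂μ) ^ (n + 1) := by
  induction n with
  | zero => simp [convPow]
  | succ n ih =>
    rw [pow_succ', ← ih]
    exact lintegral_lconvolution hf (measurable_convPow hf n)

end Group

lemma lconvolution_neg [AddCommGroup G] [MeasurableNeg G] {f g : G → ℝ≥0∞} {μ : Measure G}
    [μ.IsNegInvariant] (hf : ∀ x, f (-x) = f x) (hg : ∀ x, g (-x) = g x)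
    (x : G) : (f ⋆ₗ[μ] g) (-x) = (f ⋆ₗ[μ] g) x := by
  simp only [lconvolution_def]
  rw [← lintegral_neg_eq_self]
  refine lintegral_congr fun y ↦ ?_
  rw [hf, ← hg, neg_add, neg_neg, neg_neg]

section Young

lemma lintegral_rpow_mul_rpow_mul_rpow_le {α : Type*} [MeasurableSpace α] {μ : Measure α}
    {f g h : α → ℝ≥0∞} (hf : Measurable f) (hg : Measurable g) (hh : Measurable h) {u v w : ℝ}
    (hu : 0 ≤ u) (hv : 0 ≤ v) (hw : 0 ≤ w) (huvw : u + v + w = 1) :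
    ∫⁻ x, f x ^ u * g x ^ v * h x ^ w ∂μ ≤
      (∫⁻ x, f x ∂μ) ^ u * (∫⁻ x, g x ∂μ) ^ v * (∫⁻ x, h x ∂μ) ^ w := by
  have := ENNReal.lintegral_prod_norm_pow_le (μ := μ) Finset.univ (f := ![f, g, h])
    (p := ![u, v, w]) (by simp [Fin.forall_fin_succ, hf.aemeasurable, hg.aemeasurable,
      hh.aemeasurable]) (by simpa [Fin.sum_univ_three]) (by simp [Fin.forall_fin_succ, hu, hv, hw])
  simpa [Fin.prod_univ_three] using this

lemma mul_mul_eq_rpow_mul_rpow_mul_rpow (a b c : ℝ≥0∞) {p q r : ℝ}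
    (hp : 1 ≤ p) (hq : 1 ≤ q) (hr : 1 ≤ r) (hpqr : p⁻¹ + q⁻¹ + r⁻¹ = 2) :
    a * b * c = (a ^ p * b ^ q) ^ (1 - r⁻¹) * (a ^ p * c ^ r) ^ (1 - q⁻¹) *
      (b ^ q * c ^ r) ^ (1 - p⁻¹) := by
  have hu : 0 ≤ 1 - r⁻¹ := sub_nonneg.2 (inv_le_one_of_one_le₀ hr)
  have hv : 0 ≤ 1 - q⁻¹ := sub_nonneg.2 (inv_le_one_of_one_le₀ hq)
  have hw : 0 ≤ 1 - p⁻¹ := sub_nonneg.2 (inv_le_one_of_one_le₀ hp)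
  have split (t : ℝ≥0∞) {s i j : ℝ} (hs : 1 ≤ s) (hi : 0 ≤ i) (hj : 0 ≤ j)
      (hij : i + j = s⁻¹) : t = (t ^ s) ^ i * (t ^ s) ^ j := by
    rw [← ENNReal.rpow_add_of_nonneg _ _ hi hj, hij, ENNReal.rpow_rpow_inv (by positivity)]
  simp only [ENNReal.mul_rpow_of_nonneg _ _ hu, ENNReal.mul_rpow_of_nonneg _ _ hv,
    ENNReal.mul_rpow_of_nonneg _ _ hw]
  nth_rw 1 [split a hp hu hv (by linarith), split b hq hu hw (by linarith),
    split c hr hv hw (by linarith)]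
  ring

variable [AddCommGroup G] [MeasurableAdd₂ G] [MeasurableNeg G] {μ : Measure G} [SFinite μ]
  [μ.IsAddLeftInvariant] [μ.IsNegInvariant] {f g h : G → ℝ≥0∞}

lemma lintegral_prod_mul_comp_neg_add (hf : Measurable f) (hg : Measurable g) (x : G) :
    ∫⁻ z, f z.1 * g (-z.2 + (-z.1 + x)) ∂μ.prod μ = (∫⁻ y, f y ∂μ) * ∫⁻ y, g y ∂μ := by
  rw [lintegral_prod _ (by fun_prop), ← lintegral_mul_const _ hf]
  refine lintegral_congr fun y ↦ ?_
  simp_rw [neg_add_eq_sub _ (-y + x)]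
  rw [lintegral_const_mul _ (by fun_prop), lintegral_sub_left_eq_self]

theorem young_lconvolution_lconvolution_le (hf : Measurable f) (hg : Measurable g)
    (hh : Measurable h) {p q r : ℝ} (hp : 1 ≤ p) (hq : 1 ≤ q) (hr : 1 ≤ r)
    (hpqr : p⁻¹ + q⁻¹ + r⁻¹ = 2) (x : G) :
    (f ⋆ₗ[μ] g ⋆ₗ[μ] h) x ≤
      (∫⁻ y, f y ^ p ∂μ) ^ p⁻¹ * (∫⁻ y, g y ^ q ∂μ) ^ q⁻¹ * (∫⁻ y, h y ^ r ∂μ) ^ r⁻¹ := by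
  have hfg : ∫⁻ z, f z.1 ^ p * g z.2 ^ q ∂μ.prod μ = (∫⁻ y, f y ^ p ∂μ) * ∫⁻ y, g y ^ q ∂μ :=
    lintegral_prod_mul (hf.pow_const p).aemeasurable (hg.pow_const q).aemeasurable
  have hfh : ∫⁻ z, f z.1 ^ p * h (-z.2 + (-z.1 + x)) ^ r ∂μ.prod μ =
      (∫⁻ y, f y ^ p ∂μ) * ∫⁻ y, h y ^ r ∂μ :=
    lintegral_prod_mul_comp_neg_add (hf.pow_const p) (hh.pow_const r) x
  have hgh : ∫⁻ z, g z.2 ^ q * h (-z.2 + (-z.1 + x)) ^ r ∂μ.prod μ =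
      (∫⁻ y, g y ^ q ∂μ) * ∫⁻ y, h y ^ r ∂μ := by
    rw [← lintegral_prod_mul_comp_neg_add (hg.pow_const q) (hh.pow_const r) x,
      ← lintegral_prod_swap]
    refine lintegral_congr fun z ↦ ?_
    rw [Prod.fst_swap, Prod.snd_swap, add_left_comm]
  calc (f ⋆ₗ[μ] g ⋆ₗ[μ] h) x
      = ∫⁻ z, f z.1 * g z.2 * h (-z.2 + (-z.1 + x)) ∂μ.prod μ := by
        rw [lintegral_prod _ (by fun_prop)]
        simp_rw [lconvolution_def, mul_assoc]
        exact lintegral_congr fun y ↦ (lintegral_const_mul _ (by fun_prop)).symm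
    _ ≤ ((∫⁻ y, f y ^ p ∂μ) * ∫⁻ y, g y ^ q ∂μ) ^ (1 - r⁻¹) *
          ((∫⁻ y, f y ^ p ∂μ) * ∫⁻ y, h y ^ r ∂μ) ^ (1 - q⁻¹) *
          ((∫⁻ y, g y ^ q ∂μ) * ∫⁻ y, h y ^ r ∂μ) ^ (1 - p⁻¹) := by
        rw [← hfg, ← hfh, ← hgh, lintegral_congr fun _ ↦
          mul_mul_eq_rpow_mul_rpow_mul_rpow _ _ _ hp hq hr hpqr]
        exact lintegral_rpow_mul_rpow_mul_rpow_le (by fun_prop) (by fun_prop) (by fun_prop)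
          (sub_nonneg.2 (inv_le_one_of_one_le₀ hr)) (sub_nonneg.2 (inv_le_one_of_one_le₀ hq))
          (sub_nonneg.2 (inv_le_one_of_one_le₀ hp)) (by linarith)
    _ = _ := by
        have hroot (t : ℝ≥0∞) {s : ℝ} (hs : 1 ≤ s) : (t ^ s⁻¹) ^ s = t :=
          ENNReal.rpow_inv_rpow (by positivity) t
        conv_rhs => rw [mul_mul_eq_rpow_mul_rpow_mul_rpow _ _ _ hp hq hr hpqr,
          hroot _ hp, hroot _ hq, hroot _ hr]

lemma exists_forall_convPow_le (hf : Measurable f) (hf₁ : ∫⁻ x, f x ∂μ ≠ ∞)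
    (hf₂ : ∫⁻ x, f x ^ (3 / 2 : ℝ) ∂μ ≠ ∞) (n : ℕ) :
    ∃ M ≠ ∞, ∀ x, convPow f μ (n + 2) x ≤ M := by
  induction n with
  | zero =>
    refine ⟨_, ?_, young_lconvolution_lconvolution_le (p := 3 / 2) (q := 3 / 2) (r := 3 / 2)
      hf hf hf (by norm_num) (by norm_num) (by norm_num) (by norm_num)⟩
    have := rpow_ne_top_of_nonneg (y := (3 / 2 : ℝ)⁻¹) (by norm_num) hf₂
    exact mul_ne_top (mul_ne_top this this) this
  | succ n ih =>
    obtain ⟨M, hM, hle⟩ := ih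
    exact ⟨_, mul_ne_top hf₁ hM, lconvolution_le_lintegral_mul hf hle⟩

end Young

lemma convPow_eq_zero [SeminormedAddCommGroup G] {μ : Measure G} {f : G → ℝ≥0∞} {r : ℝ}
    (hf : ∀ x, r ≤ ‖x‖ → f x = 0) (n : ℕ) {x : G} (hx : (n + 1) * r ≤ ‖x‖) :
    convPow f μ n x = 0 := by
  induction n generalizing x with
  | zero => exact hf x (by simpa using hx)
  | succ n ih =>
    refine (lintegral_congr fun y ↦ ?_).trans lintegral_zero
    rcases le_or_gt r ‖y‖ with hy | hy
    · simp [hf y hy]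
    · rw [ih, mul_zero]
      push_cast at hx
      rw [neg_add_eq_sub]
      linarith [norm_sub_norm_le x y]

/-- Averaging over a ball around `x / (n + 2)` leaves the remaining `n + 1` factors with a point
of norm at most about `(n + 1) / (n + 2) * ‖x‖`. -/
lemma exists_forall_le_convPow [NormedAddCommGroup G] [NormedSpace ℝ G] [BorelSpace G]
    [FiniteDimensional ℝ G] {μ : Measure G} [μ.IsAddHaarMeasure] {f : G → ℝ≥0∞} {a : ℝ≥0∞}
    (ha : a ≠ 0) {r : ℝ} (hf : ∀ x, ‖x‖ < r → a ≤ f x) (n : ℕ) {s : ℝ} (hs : s < r) :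
    ∃ c ≠ 0, ∀ x, ‖x‖ ≤ (n + 1) * s → c ≤ convPow f μ n x := by
  induction n generalizing s with
  | zero => exact ⟨a, ha, fun x hx ↦ hf x (lt_of_le_of_lt (by simpa using hx) hs)⟩
  | succ n ih =>
    obtain ⟨δ, hδ, hsδ⟩ : ∃ δ > 0, s + δ < r := ⟨(r - s) / 2, by linarith, by linarith⟩
    obtain ⟨c, hc, hle⟩ := ih hsδ
    have hball : 0 < μ (Metric.closedBall 0 δ) := Metric.measure_closedBall_pos μ 0 hδ
    refine ⟨a * c * μ (Metric.closedBall 0 δ), by simp [ha, hc, hball.ne'], fun x hx ↦ ?_⟩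
    set t : G := ((n : ℝ) + 2)⁻¹ • x
    have hxt : x - t = ((n : ℝ) + 1) • t := by
      simp only [t, smul_smul]
      nth_rw 1 [← one_smul ℝ x, ← sub_smul]
      congr 1
      field_simp
      ring
    have ht : ‖t‖ ≤ s := by
      rw [norm_smul, norm_inv, Real.norm_of_nonneg (by positivity), inv_mul_le_iff₀ (by positivity)]
      push_cast at hx
      linarith
    rw [← Measure.addHaar_closedBall_center μ t δ]
    refine mul_measure_le_lconvolution measurableSet_closedBall (fun y hy ↦ hf y ?_)
      (fun y hy ↦ hle _ ?_)
    · rw [mem_closedBall_iff_norm] at hy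
      linarith [norm_le_norm_add_norm_sub' y t]
    · rw [mem_closedBall_iff_norm'] at hy
      calc ‖-y + x‖ = ‖(x - t) + (t - y)‖ := by congr 1; abel
        _ ≤ (n + 1) * ‖t‖ + δ := by
          refine norm_add_le_of_le ?_ hy
          rw [hxt, norm_smul, Real.norm_of_nonneg (by positivity)]
        _ ≤ (n + 1) * (s + δ) := by nlinarith [n.cast_nonneg (α := ℝ)]

lemma map_pi_sum_succ_eq_conv {α : Type*} [MeasurableSpace α] {μ : Measure α} [SigmaFinite μ]
    [AddCommMonoid G] [MeasurableAdd₂ G] {s : α → G} (hs : Measurable s) (n : ℕ) :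
    (Measure.pi fun _ : Fin (n + 1) ↦ μ).map (fun ξ ↦ ∑ j, s (ξ j)) =
      μ.map s ∗ (Measure.pi fun _ : Fin n ↦ μ).map fun ξ ↦ ∑ j, s (ξ j) := by
  have hsum : Measurable fun ξ : Fin n → α ↦ ∑ j, s (ξ j) := by fun_prop
  rw [Measure.conv, Measure.map_prod_map _ _ hs hsum,
    Measure.map_map (by fun_prop) (hs.prodMap hsum),
    ← (measurePreserving_piFinSuccAbove (fun _ ↦ μ) 0).map_eq,
    Measure.map_map (by fun_prop) (MeasurableEquiv.measurable _)]
  congr 1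
  ext ξ
  simp [Fin.sum_univ_succ, MeasurableEquiv.piFinSuccAbove, Fin.tail]

lemma map_pi_sum_eq_smul_withDensity_convPow {α : Type*} [MeasurableSpace α] {μ : Measure α}
    [SigmaFinite μ] [AddCommGroup G] [MeasurableAdd₂ G] [MeasurableNeg G] {ν : Measure G}
    [SFinite ν] [ν.IsAddLeftInvariant] {f : G → ℝ≥0∞} (hf : Measurable f) {s : α → G}
    (hs : Measurable s) {c : ℝ≥0∞} (h : μ.map s = c • ν.withDensity f) (n : ℕ) :
    (Measure.pi fun _ : Fin (n + 1) ↦ μ).map (fun ξ ↦ ∑ j, s (ξ j)) =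
      c ^ (n + 1) • ν.withDensity (convPow f ν n) := by
  induction n with
  | zero =>
    rw [map_pi_sum_succ_eq_conv hs, h, Measure.pi_of_empty, Measure.map_dirac' (by fun_prop)]
    simp [convPow]
  | succ n ih =>
    rw [map_pi_sum_succ_eq_conv hs, ih, h, Measure.conv_smul_left, Measure.conv_smul_right,
      conv_withDensity_eq_lconvolution hf (measurable_convPow hf n), smul_smul, ← pow_succ']
    rfl

end Convolution

section ChangeOfVariables

lemma map_restrict_eq_smul_withDensity {s : Set ℝ} (hs : MeasurableSet s) {f f' : ℝ → ℝ}
    (hf : Measurable f) (hf' : ∀ x ∈ s, HasDerivWithinAt f (f' x) s x) (hinj : InjOn f s)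
    {h : ℝ → ℝ≥0∞} (hh : Measurable h) (hsupp : ∀ y ∉ f '' s, h y = 0) {c : ℝ≥0∞} (hc : c ≠ ∞)
    (hfh : ∀ x ∈ s, c * (ENNReal.ofReal |f' x| * h (f x)) = 1) :
    (volume.restrict s).map f = c • volume.withDensity h := by
  refine Measure.ext_of_lintegral _ fun φ hφ ↦ ?_
  calc ∫⁻ y, φ y ∂(volume.restrict s).map f
      = ∫⁻ x in s, c * (ENNReal.ofReal |f' x| * (h (f x) * φ (f x))) := by
        rw [lintegral_map hφ hf]
        refine setLIntegral_congr_fun hs fun x hx ↦ ?_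
        rw [← mul_assoc (ENNReal.ofReal _), ← mul_assoc c, hfh x hx, one_mul]
    _ = c * ∫⁻ y in f '' s, h y * φ y := by
        rw [lintegral_const_mul' _ _ hc, lintegral_image_eq_lintegral_abs_deriv_mul hs hf' hinj]
    _ = c * ∫⁻ y, h y * φ y := by
        rw [setLIntegral_eq_of_support_subset]
        exact fun y hy ↦ not_imp_comm.1 (hsupp y) (left_ne_zero_of_mul hy)
    _ = ∫⁻ y, φ y ∂(c • volume.withDensity h) := by
        rw [lintegral_smul_measure, lintegral_withDensity_eq_lintegral_mul _ hh hφ]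
        rfl

lemma setLIntegral_Ioc_neg_eq_two_mul {f : ℝ → ℝ≥0∞} (hf : ∀ x, f (-x) = f x) {a : ℝ} (ha : 0 ≤ a) :
    ∫⁻ x in Ioc (-a) a, f x = 2 * ∫⁻ x in Ioo 0 a, f x := by
  have hneg : ∫⁻ x in Ioc (-a) 0, f x = ∫⁻ x in Ioo 0 a, f x := by
    rw [← restrict_Ioo_eq_restrict_Ioc, ← lintegral_indicator measurableSet_Ioo,
      ← lintegral_indicator measurableSet_Ioo, ← lintegral_neg_eq_self]
    refine lintegral_congr fun x ↦ ?_
    simp only [indicator, mem_Ioo, hf, neg_lt_neg_iff, neg_lt_zero, and_comm]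
  rw [← Ioc_union_Ioc_eq_Ioc (neg_nonpos.2 ha) ha,
    lintegral_union measurableSet_Ioc (Ioc_disjoint_Ioc_of_le le_rfl), hneg,
    ← restrict_Ioo_eq_restrict_Ioc, two_mul]

end ChangeOfVariables

section Arcsine

/-- The arcsine density on `(-2, 2)`, which is the law of `2 * cos x` for uniform `x` on the circle.
The junk values of `√` and `⁻¹` make it vanish off `(-2, 2)`. -/
def arcsineDensity (s : ℝ) : ℝ≥0∞ := ENNReal.ofReal (Real.pi * √(4 - s ^ 2))⁻¹

lemma measurable_arcsineDensity : Measurable arcsineDensity := by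
  unfold arcsineDensity
  fun_prop

lemma arcsineDensity_neg (s : ℝ) : arcsineDensity (-s) = arcsineDensity s := by
  simp [arcsineDensity]

lemma arcsineDensity_eq_zero {s : ℝ} (hs : 2 ≤ |s|) : arcsineDensity s = 0 := by
  rw [arcsineDensity, Real.sqrt_eq_zero_of_nonpos (by nlinarith [sq_abs s])]
  simp

lemma le_arcsineDensity {s : ℝ} (hs : |s| < 2) :
    ENNReal.ofReal (2 * Real.pi)⁻¹ ≤ arcsineDensity s := by
  have hpos : 0 < 4 - s ^ 2 := by nlinarith [sq_abs s, abs_nonneg s]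
  have hle : √(4 - s ^ 2) ≤ 2 := Real.sqrt_le_iff.2 ⟨by norm_num, by nlinarith [sq_nonneg s]⟩
  rw [arcsineDensity, mul_comm 2]
  gcongr

lemma arcsineDensity_le {s : ℝ} (hs : s ∈ Ioo 0 2) :
    arcsineDensity s ≤ ENNReal.ofReal ((2 - s) ^ (-2⁻¹ : ℝ)) := by
  have hpos : 0 < 2 - s := sub_pos.2 hs.2
  rw [arcsineDensity, Real.rpow_neg hpos.le, ← one_div (2 : ℝ), ← Real.sqrt_eq_rpow]
  refine ofReal_le_ofReal (inv_anti₀ (Real.sqrt_pos.2 hpos) ?_)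
  calc √(2 - s) ≤ √(4 - s ^ 2) := Real.sqrt_le_sqrt (by nlinarith [hs.1])
    _ ≤ Real.pi * √(4 - s ^ 2) :=
      le_mul_of_one_le_left (Real.sqrt_nonneg _) (by linarith [Real.pi_gt_three])

lemma lintegral_arcsineDensity_rpow_ne_top {p : ℝ} (hp₀ : 0 < p) (hp₂ : p < 2) :
    ∫⁻ s, arcsineDensity s ^ p ≠ ∞ := by
  have hsupp : (Function.support fun s ↦ arcsineDensity s ^ p) ⊆ Ioc (-2) 2 := fun s hs ↦ by
    by_contra hs'
    have hzero : arcsineDensity s = 0 :=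
      arcsineDensity_eq_zero (not_lt.1 fun h ↦ hs' (Ioo_subset_Ioc_self (abs_lt.1 h)))
    simp [hzero, hp₀] at hs
  have hint : IntegrableOn (fun s : ℝ ↦ (2 - s) ^ (-2⁻¹ * p)) (Ioo 0 2) := by
    rw [← integrableOn_Ioc_iff_integrableOn_Ioo, ← intervalIntegrable_iff_integrableOn_Ioc_of_le
      zero_le_two]
    have := (intervalIntegral.intervalIntegrable_rpow' (a := 0) (b := 2) (r := -2⁻¹ * p)
      (by linarith)).comp_sub_left 2
    simpa using this.symm
  rw [← setLIntegral_eq_of_support_subset hsupp,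
    setLIntegral_Ioc_neg_eq_two_mul (fun s ↦ by rw [arcsineDensity_neg]) zero_le_two]
  refine mul_ne_top ofNat_ne_top (ne_top_of_le_ne_top hint.lintegral_lt_top.ne ?_)
  refine setLIntegral_mono' measurableSet_Ioo fun s hs ↦ ?_
  have hpos : 0 < 2 - s := sub_pos.2 hs.2
  rw [Real.rpow_mul hpos.le, ← ENNReal.ofReal_rpow_of_nonneg (by positivity) hp₀.le]
  exact ENNReal.rpow_le_rpow (arcsineDensity_le hs) hp₀.le

lemma lintegral_arcsineDensity_ne_top : ∫⁻ s, arcsineDensity s ≠ ∞ := by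
  simpa using lintegral_arcsineDensity_rpow_ne_top one_pos one_lt_two

lemma image_two_mul_cos_Ioo : (fun x ↦ 2 * Real.cos x) '' Ioo 0 Real.pi = Ioo (-2) 2 := by
  have hcos : Real.cos '' Ioo 0 Real.pi = Ioo (-1) 1 :=
    Real.cosPartialHomeomorph.image_source_eq_target
  rw [← image_image (2 * ·), hcos, image_mul_left_Ioo two_pos]
  norm_num

lemma map_restrict_two_mul_cos :
    (volume.restrict (Ioo 0 Real.pi)).map (fun x ↦ 2 * Real.cos x) =
      ENNReal.ofReal Real.pi • volume.withDensity arcsineDensity := by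
  refine map_restrict_eq_smul_withDensity measurableSet_Ioo (by fun_prop)
    (fun x _ ↦ ((Real.hasDerivAt_cos x).const_mul 2).hasDerivWithinAt) (fun x hx y hy hxy ↦ ?_)
    measurable_arcsineDensity (fun s hs ↦ ?_) ofReal_ne_top fun x hx ↦ ?_
  · exact Real.injOn_cos (Ioo_subset_Icc_self hx) (Ioo_subset_Icc_self hy) (by simpa using hxy)
  · rw [image_two_mul_cos_Ioo] at hs
    exact arcsineDensity_eq_zero (not_lt.1 fun h ↦ hs (abs_lt.1 h))
  · have hsin := Real.sin_pos_of_pos_of_lt_pi hx.1 hx.2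
    have hsqrt : √(4 - (2 * Real.cos x) ^ 2) = 2 * Real.sin x := by
      rw [← Real.sqrt_sq (by positivity : 0 ≤ 2 * Real.sin x)]
      congr 1
      linear_combination -4 * Real.sin_sq_add_cos_sq x
    rw [arcsineDensity, hsqrt, mul_neg, abs_neg, abs_of_pos (by positivity),
      ← ofReal_mul (by positivity), ← ofReal_mul Real.pi_nonneg, ← ofReal_one]
    congr 1
    field_simp

instance : BorelSpace Real.Angle :=
  inferInstanceAs (BorelSpace (AddCircle (2 * Real.pi)))

instance : IsFiniteMeasure (volume : Measure Real.Angle) :=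
  inferInstanceAs (IsFiniteMeasure (volume : Measure (AddCircle (2 * Real.pi))))

@[fun_prop]
lemma measurable_angle_cos : Measurable Real.Angle.cos := Real.Angle.continuous_cos.measurable

lemma lintegral_angle_eq_setLIntegral_Ioc (f : Real.Angle → ℝ≥0∞) :
    ∫⁻ x, f x = ∫⁻ x in Ioc (-Real.pi) Real.pi, f x := by
  rw [show Ioc (-Real.pi) Real.pi = Ioc (-Real.pi) (-Real.pi + 2 * Real.pi) by ring_nf]
  exact (AddCircle.lintegral_preimage (2 * Real.pi) (-Real.pi) f).symm

lemma map_two_mul_angle_cos : (volume : Measure Real.Angle).map (fun x ↦ 2 * x.cos) =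
    ENNReal.ofReal (2 * Real.pi) • volume.withDensity arcsineDensity := by
  rw [ofReal_mul zero_le_two, ← smul_smul, ← map_restrict_two_mul_cos]
  refine Measure.ext_of_lintegral _ fun φ hφ ↦ ?_
  rw [lintegral_map hφ (by fun_prop), lintegral_smul_measure, lintegral_map hφ (by fun_prop),
    lintegral_angle_eq_setLIntegral_Ioc]
  simpa using setLIntegral_Ioc_neg_eq_two_mul (f := fun x ↦ φ (2 * Real.cos x)) (by simp)
    Real.pi_nonneg

end Arcsine

section LogarithmicBound

lemma lintegral_Ioc_inv_sqrt_mul {a : ℝ} (ha : 0 < a) :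
    ∫⁻ v in Ioc 0 a, ENNReal.ofReal (√(v * a))⁻¹ = 2 := by
  have hint : IntegrableOn (fun v : ℝ ↦ v ^ (-2⁻¹ : ℝ)) (Ioc 0 a) :=
    (intervalIntegrable_iff_integrableOn_Ioc_of_le ha.le).1
      (intervalIntegral.intervalIntegrable_rpow' (by norm_num))
  calc ∫⁻ v in Ioc 0 a, ENNReal.ofReal (√(v * a))⁻¹
      = ∫⁻ v in Ioc 0 a, ENNReal.ofReal (v ^ (-2⁻¹ : ℝ)) * ENNReal.ofReal (√a)⁻¹ := by
        refine setLIntegral_congr_fun measurableSet_Ioc fun v hv ↦ ?_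
        have hv₀ := hv.1.le
        rw [← ofReal_mul (by positivity), Real.sqrt_mul hv₀, mul_inv, Real.rpow_neg hv₀,
          ← one_div (2 : ℝ), ← Real.sqrt_eq_rpow]
    _ = ENNReal.ofReal (a ^ (1 / 2 : ℝ) / (1 / 2)) * ENNReal.ofReal (√a)⁻¹ := by
        rw [lintegral_mul_const' _ _ ofReal_ne_top, ← ofReal_integral_eq_lintegral_ofReal hint,
          ← intervalIntegral.integral_of_le ha.le, integral_rpow (Or.inl (by norm_num))]
        · norm_num
        · filter_upwards [ae_restrict_mem measurableSet_Ioc] with v hv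
          exact Real.rpow_nonneg hv.1.le _
    _ = 2 := by
        rw [← ofReal_mul (by positivity), ← Real.sqrt_eq_rpow]
        field_simp
        norm_num

lemma lintegral_Ioc_inv {a b : ℝ} (ha : 0 < a) (hab : a ≤ b) :
    ∫⁻ v in Ioc a b, ENNReal.ofReal v⁻¹ = ENNReal.ofReal (Real.log (b / a)) := by
  have hint : IntegrableOn (fun v : ℝ ↦ v⁻¹) (Ioc a b) :=
    (intervalIntegrable_iff_integrableOn_Ioc_of_le hab).1
      (intervalIntegral.intervalIntegrable_inv
        (fun v hv ↦ (ha.trans_le (uIcc_of_le hab ▸ hv).1).ne') continuousOn_id)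
  rw [← ofReal_integral_eq_lintegral_ofReal hint, ← intervalIntegral.integral_of_le hab,
    integral_inv_of_pos ha (ha.trans_le hab)]
  filter_upwards [ae_restrict_mem measurableSet_Ioc] with v hv
  exact inv_nonneg.2 (ha.trans hv.1).le

/-- The kernel `(v * max v a)^(-1/2)` cut off to `(0, b]`: an inverse square root singularity at `0`
which turns into `1 / v` at distance `a`. It majorizes the product of two arcsine densities having
poles at distance comparable to `a` of each other. -/
def twoPoleKernel (a b : ℝ) : ℝ → ℝ≥0∞ :=
  indicator (Ioc 0 b) fun v ↦ ENNReal.ofReal (√(v * max v a))⁻¹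

lemma measurable_twoPoleKernel (a b : ℝ) : Measurable (twoPoleKernel a b) :=
  Measurable.indicator (by fun_prop) measurableSet_Ioc

lemma lintegral_twoPoleKernel {a b : ℝ} (ha : 0 < a) (hab : a ≤ b) :
    ∫⁻ v, twoPoleKernel a b v = ENNReal.ofReal (2 + Real.log (b / a)) := by
  have hnear : ∫⁻ v in Ioc 0 a, ENNReal.ofReal (√(v * max v a))⁻¹ = 2 := by
    rw [← lintegral_Ioc_inv_sqrt_mul ha]
    exact setLIntegral_congr_fun measurableSet_Ioc fun v hv ↦ by simp only [max_eq_right hv.2]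
  have hfar : ∫⁻ v in Ioc a b, ENNReal.ofReal (√(v * max v a))⁻¹ =
      ENNReal.ofReal (Real.log (b / a)) := by
    rw [← lintegral_Ioc_inv ha hab]
    refine setLIntegral_congr_fun measurableSet_Ioc fun v hv ↦ ?_
    simp only [max_eq_left hv.1.le, Real.sqrt_mul_self (ha.trans hv.1).le]
  have hlog : 0 ≤ Real.log (b / a) := Real.log_nonneg ((one_le_div ha).2 hab)
  simp only [twoPoleKernel]
  rw [lintegral_indicator measurableSet_Ioc, ← Ioc_union_Ioc_eq_Ioc ha.le hab,
    lintegral_union measurableSet_Ioc (Ioc_disjoint_Ioc_of_le le_rfl), hnear, hfar,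
    ofReal_add zero_le_two hlog, ofReal_ofNat]

variable {σ a b : ℝ}

lemma arcsineDensity_mul_le_twoPoleKernel (hσ : 0 < σ) (ha : 0 < a) (hab : a ≤ b)
    (hsum : a + b = 4 - σ) :
    arcsineDensity (2 - a) * arcsineDensity (2 - b) ≤
      twoPoleKernel (min σ 1 * (2 - σ / 2)) (2 - σ / 2) a := by
  have hb : 0 < b := ha.trans_le hab
  have hba : 0 < 4 - a := by linarith
  have hbb : 0 < 4 - b := by linarith
  have hmax : max a (min σ 1 * (2 - σ / 2)) ≤ (4 - a) * (b * (4 - b)) := by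
    refine max_le ?_ ?_
    · have h4a : 1 ≤ (4 - a) * (4 - a) := by nlinarith
      calc a ≤ a * ((4 - a) * (4 - a)) := le_mul_of_one_le_right ha.le h4a
        _ = (4 - a) * (a * (4 - a)) := by ring
        _ ≤ (4 - a) * (b * (4 - b)) := mul_le_mul_of_nonneg_left (by nlinarith) hba.le
    · calc min σ 1 * (2 - σ / 2) ≤ σ * (2 - σ / 2) :=
          mul_le_mul_of_nonneg_right (min_le_left _ _) (by linarith)
        _ ≤ (4 - b) * b := mul_le_mul (by linarith) (by linarith) (by linarith) hbb.le
        _ ≤ (4 - a) * (b * (4 - b)) := by nlinarith [mul_pos hb hbb]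
  rw [twoPoleKernel, indicator_of_mem (mem_Ioc.2 ⟨ha, by linarith⟩), arcsineDensity, arcsineDensity,
    ← ofReal_mul (by positivity), ← mul_inv]
  refine ofReal_le_ofReal (inv_anti₀ (Real.sqrt_pos.2 (by positivity)) ?_)
  calc √(a * max a (min σ 1 * (2 - σ / 2)))
      ≤ √((4 - (2 - a) ^ 2) * (4 - (2 - b) ^ 2)) := by
        refine Real.sqrt_le_sqrt ((mul_le_mul_of_nonneg_left hmax ha.le).trans_eq ?_)
        ring
    _ = √(4 - (2 - a) ^ 2) * √(4 - (2 - b) ^ 2) := Real.sqrt_mul (by nlinarith) _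
    _ ≤ Real.pi * √(4 - (2 - a) ^ 2) * (Real.pi * √(4 - (2 - b) ^ 2)) := by
        have hpi : 1 ≤ Real.pi := by linarith [Real.pi_gt_three]
        gcongr <;> exact le_mul_of_one_le_left (Real.sqrt_nonneg _) hpi

lemma arcsineDensity_mul_comp_neg_add_le (hσ : 0 < σ) (t : ℝ) :
    arcsineDensity t * arcsineDensity (-t + σ) ≤
      twoPoleKernel (min σ 1 * (2 - σ / 2)) (2 - σ / 2) (2 - t) +
        twoPoleKernel (min σ 1 * (2 - σ / 2)) (2 - σ / 2) (2 - σ + t) := by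
  rcases le_or_gt 2 |t| with ht | ht
  · simp [arcsineDensity_eq_zero ht]
  rcases le_or_gt 2 |-t + σ| with ht' | ht'
  · simp [arcsineDensity_eq_zero ht']
  rw [abs_lt] at ht ht'
  have ht₁ : 2 - (2 - t) = t := by ring
  have ht₂ : 2 - (2 - σ + t) = -t + σ := by ring
  rcases le_total (2 - t) (2 - σ + t) with h | h
  · have := arcsineDensity_mul_le_twoPoleKernel hσ (by linarith) h (by ring)
    rw [ht₁, ht₂] at this
    exact this.trans le_self_add
  · have := arcsineDensity_mul_le_twoPoleKernel hσ (by linarith) h (by ring)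
    rw [ht₁, ht₂, mul_comm] at this
    exact this.trans le_add_self

lemma neg_log_min_one_le_abs_log (σ : ℝ) : -Real.log (min σ 1) ≤ |Real.log σ| := by
  rcases min_choice σ 1 with h | h
  · rw [h]
    exact neg_le_abs _
  · simp [h]

lemma lconvolution_arcsineDensity_le (hσ : σ ≠ 0) :
    (arcsineDensity ⋆ₗ arcsineDensity) σ ≤ ENNReal.ofReal (4 * (1 + |Real.log (|σ|⁻¹)|)) := by
  wlog hpos : 0 < σ generalizing σ
  · rw [← lconvolution_neg arcsineDensity_neg arcsineDensity_neg, ← abs_neg σ]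
    exact this (neg_ne_zero.2 hσ) (neg_pos.2 (lt_of_le_of_ne (not_lt.1 hpos) hσ))
  rw [abs_of_pos hpos, Real.log_inv, abs_neg]
  rcases le_or_gt 4 σ with h4 | h4
  · have : convPow arcsineDensity volume 1 σ = 0 :=
      convPow_eq_zero (fun s ↦ arcsineDensity_eq_zero) 1 (by norm_num [abs_of_pos hpos, h4])
    exact this.trans_le zero_le
  have hL : 0 < 2 - σ / 2 := by linarith
  have hkernel : ∫⁻ v, twoPoleKernel (min σ 1 * (2 - σ / 2)) (2 - σ / 2) v ≤
      ENNReal.ofReal (2 + |Real.log σ|) := by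
    rw [lintegral_twoPoleKernel (by positivity)
      (mul_le_of_le_one_left hL.le (min_le_right _ _)), div_mul_cancel_right₀ hL.ne', Real.log_inv]
    gcongr
    exact neg_log_min_one_le_abs_log σ
  calc (arcsineDensity ⋆ₗ arcsineDensity) σ
      ≤ ∫⁻ t, (twoPoleKernel (min σ 1 * (2 - σ / 2)) (2 - σ / 2) (2 - t) +
          twoPoleKernel (min σ 1 * (2 - σ / 2)) (2 - σ / 2) (2 - σ + t)) :=
        lintegral_mono (arcsineDensity_mul_comp_neg_add_le hpos)
    _ ≤ ENNReal.ofReal (2 + |Real.log σ|) + ENNReal.ofReal (2 + |Real.log σ|) := by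
        have hmeas := measurable_twoPoleKernel (min σ 1 * (2 - σ / 2)) (2 - σ / 2)
        rw [lintegral_add_left (by fun_prop), lintegral_sub_left_eq_self _ 2,
          lintegral_add_left_eq_self]
        exact add_le_add hkernel hkernel
    _ ≤ ENNReal.ofReal (4 * (1 + |Real.log σ|)) := by
        rw [← ofReal_add (by positivity) (by positivity)]
        exact ofReal_le_ofReal (by linarith [abs_nonneg (Real.log σ)])

end LogarithmicBound

section ToRealOrOne

/-- The conversion `ℝ≥0∞ → ℝ` sending `∞` to `1`. Unlike with `ENNReal.toReal`, the poles of a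
density then keep a positive value, so that lower bounds survive. -/
def toRealOrOne (x : ℝ≥0∞) : ℝ := if x = ∞ then 1 else x.toReal

lemma measurable_toRealOrOne : Measurable toRealOrOne :=
  Measurable.ite (measurableSet_singleton ∞) measurable_const ENNReal.measurable_toReal

lemma toRealOrOne_of_ne_top {x : ℝ≥0∞} (hx : x ≠ ∞) : toRealOrOne x = x.toReal := if_neg hx

lemma toRealOrOne_nonneg (x : ℝ≥0∞) : 0 ≤ toRealOrOne x := by
  unfold toRealOrOne
  split_ifs
  exacts [zero_le_one, toReal_nonneg]

lemma toRealOrOne_le {x : ℝ≥0∞} {C : ℝ} (hC : 0 ≤ C) (hx : x ≤ ENNReal.ofReal C) :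
    toRealOrOne x ≤ C := by
  rw [toRealOrOne_of_ne_top (ne_top_of_le_ne_top ofReal_ne_top hx)]
  exact toReal_le_of_le_ofReal hC hx

lemma toReal_min_one_le_toRealOrOne {c x : ℝ≥0∞} (h : c ≤ x) :
    (min c 1).toReal ≤ toRealOrOne x := by
  unfold toRealOrOne
  split_ifs with hx
  · exact toReal_mono one_ne_top (min_le_right _ _)
  · exact toReal_mono hx ((min_le_left _ _).trans h)

end ToRealOrOne

section LatticeDensity

/-- The density of states of the Laplacian on `ℤ^(n + 1)`, as the `(n + 1)`-fold convolution power
of the arcsine density. -/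
def latticeDensity (n : ℕ) (σ : ℝ) : ℝ := toRealOrOne (convPow arcsineDensity volume n σ)

lemma measurable_latticeDensity (n : ℕ) : Measurable (latticeDensity n) :=
  measurable_toRealOrOne.comp (measurable_convPow measurable_arcsineDensity n)

lemma map_omegaT (n : ℕ) : (volume : Measure (Torus (n + 1))).map omegaT =
    ENNReal.ofReal (2 * Real.pi) ^ (n + 1) • volume.withDensity (convPow arcsineDensity volume n) :=
  map_pi_sum_eq_smul_withDensity_convPow measurable_arcsineDensity (by fun_prop)
    map_two_mul_angle_cos n

lemma ae_convPow_arcsineDensity_lt_top (n : ℕ) :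
    ∀ᵐ σ, convPow arcsineDensity volume n σ < ∞ := by
  refine ae_lt_top (measurable_convPow measurable_arcsineDensity n) ?_
  rw [lintegral_convPow measurable_arcsineDensity]
  exact pow_ne_top lintegral_arcsineDensity_ne_top

lemma integral_mul_latticeDensity (n : ℕ) {f : ℝ → ℝ} (hf : Continuous f) :
    ∫ σ, f σ * latticeDensity n σ =
      ((2 * Real.pi) ^ (n + 1))⁻¹ * ∫ ξ : Torus (n + 1), f (omegaT ξ) := by
  have homega : Measurable (omegaT : Torus (n + 1) → ℝ) := by
    unfold omegaT
    fun_prop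
  rw [← integral_map (f := f) homega.aemeasurable hf.aestronglyMeasurable, map_omegaT,
    integral_smul_measure, integral_withDensity_eq_integral_toReal_smul
      (measurable_convPow measurable_arcsineDensity n) (ae_convPow_arcsineDensity_lt_top n),
    toReal_pow, toReal_ofReal (by positivity), smul_eq_mul, inv_mul_cancel_left₀ (by positivity)]
  refine integral_congr_ae ?_
  filter_upwards [ae_convPow_arcsineDensity_lt_top n] with σ hσ
  rw [latticeDensity, toRealOrOne_of_ne_top hσ.ne, smul_eq_mul, mul_comm]

lemma latticeDensity_eq_zero (n : ℕ) {σ : ℝ}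
    (hσ : σ ∉ Icc (-(2 * ((n + 1 : ℕ) : ℝ))) (2 * (n + 1 : ℕ))) : latticeDensity n σ = 0 := by
  have hzero : convPow arcsineDensity volume n σ = 0 := by
    refine convPow_eq_zero (fun s ↦ arcsineDensity_eq_zero) n ?_
    rw [mem_Icc, ← abs_le, not_le] at hσ
    push_cast at hσ
    rw [Real.norm_eq_abs]
    linarith
  simp [latticeDensity, hzero, toRealOrOne]

lemma exists_forall_latticeDensity_le (n : ℕ) : ∃ C, ∀ σ, latticeDensity (n + 2) σ ≤ C := by
  obtain ⟨M, hM, hle⟩ := exists_forall_convPow_le measurable_arcsineDensity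
    lintegral_arcsineDensity_ne_top
    (lintegral_arcsineDensity_rpow_ne_top (by norm_num) (by norm_num)) n
  exact ⟨M.toReal, fun σ ↦ toRealOrOne_le toReal_nonneg ((hle σ).trans_eq (ofReal_toReal hM).symm)⟩

lemma exists_forall_latticeDensity_one_le_log :
    ∃ C, ∀ σ, latticeDensity 1 σ ≤ C * (1 + |Real.log (|σ|⁻¹)|) := by
  refine ⟨max 4 (latticeDensity 1 0), fun σ ↦ ?_⟩
  rcases eq_or_ne σ 0 with rfl | hσ
  · simp
  · calc latticeDensity 1 σ ≤ 4 * (1 + |Real.log (|σ|⁻¹)|) :=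
          toRealOrOne_le (by positivity) (lconvolution_arcsineDensity_le hσ)
      _ ≤ max 4 (latticeDensity 1 0) * (1 + |Real.log (|σ|⁻¹)|) := by
          gcongr
          exact le_max_left _ _

lemma exists_forall_le_latticeDensity (n : ℕ) {ε : ℝ} (hε : 0 < ε) :
    ∃ c > 0, ∀ σ ∈ Icc (-(2 * ((n + 1 : ℕ) : ℝ)) + ε) (2 * (n + 1 : ℕ) - ε),
      c ≤ latticeDensity n σ := by
  obtain ⟨c, hc, hle⟩ := exists_forall_le_convPow (μ := volume) (f := arcsineDensity)
    (ofReal_pos.2 (by positivity)).ne' (fun s ↦ le_arcsineDensity) n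
    (sub_lt_self 2 (by positivity : 0 < ε / (n + 1)))
  have hmin : min c 1 ≠ 0 := by simp [hc]
  refine ⟨(min c 1).toReal, toReal_pos hmin (by simp), fun σ hσ ↦
    toReal_min_one_le_toRealOrOne (hle σ ?_)⟩
  have hs : ((n : ℝ) + 1) * (2 - ε / (n + 1)) = 2 * (n + 1 : ℕ) - ε := by
    push_cast
    field_simp
  rw [hs, Real.norm_eq_abs, abs_le]
  exact ⟨by linarith [hσ.1], hσ.2⟩

end LatticeDensity

theorem density_of_states_general (d : ℕ) (hd : d ≠ 0) :
    ∃ ρ : ℝ → ℝ, Measurable ρ ∧ (∀ σ, 0 ≤ ρ σ) ∧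
      (∀ f : ℝ → ℝ, Continuous f →
        ∫ σ : ℝ, f σ * ρ σ = (((2 * Real.pi) ^ d : ℝ))⁻¹ * ∫ ξ : Torus d, f (omegaT ξ)) ∧
      (∀ σ : ℝ, σ ∉ Set.Icc (-(2 * (d : ℝ))) (2 * (d : ℝ)) → ρ σ = 0) ∧
      (3 ≤ d → ∃ C : ℝ, ∀ σ, ρ σ ≤ C) ∧
      (d = 2 → ∃ C : ℝ, ∀ σ, ρ σ ≤ C * (1 + |Real.log (|σ|⁻¹)|)) ∧
      (∀ ε : ℝ, 0 < ε →
        ∃ c : ℝ, 0 < c ∧ ∀ σ ∈ Set.Icc (-(2 * (d : ℝ)) + ε) (2 * (d : ℝ) - ε), c ≤ ρ σ) := by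
  obtain ⟨n, rfl⟩ := Nat.exists_eq_succ_of_ne_zero hd
  refine ⟨latticeDensity n, measurable_latticeDensity n, fun _ ↦ toRealOrOne_nonneg _,
    fun _ ↦ integral_mul_latticeDensity n, fun _ ↦ latticeDensity_eq_zero n, fun h3 ↦ ?_,
    fun h2 ↦ ?_, fun _ ↦ exists_forall_le_latticeDensity n⟩
  · obtain ⟨m, rfl⟩ : ∃ m, n = m + 2 := ⟨n - 2, by lia⟩
    exact exists_forall_latticeDensity_le m
  · obtain rfl : n = 1 := by lia
    exact exists_forall_latticeDensity_one_le_log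

/-- **Density of states of the lattice Laplacian.**  For `d ≥ 2` there is a nonnegative
density `ρ` with `∫ f ρ = (2π)^{-d} ∫_{𝕋^d} f(ω(ξ)) dξ`, supported on `[-2d, 2d]`,
bounded for `d ≥ 3`, bounded up to a logarithmic singularity at `0` for `d = 2`,
and bounded below on `[-2d+ε, 2d-ε]`. -/
theorem density_of_states (d : ℕ) (hd : 2 ≤ d) :
    ∃ ρ : ℝ → ℝ, Measurable ρ ∧ (∀ σ, 0 ≤ ρ σ) ∧
      (∀ f : ℝ → ℝ, Continuous f →
        ∫ σ : ℝ, f σ * ρ σ = (((2 * Real.pi) ^ d : ℝ))⁻¹ * ∫ ξ : Torus d, f (omegaT ξ)) ∧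
      (∀ σ : ℝ, σ ∉ Set.Icc (-(2 * (d : ℝ))) (2 * (d : ℝ)) → ρ σ = 0) ∧
      (3 ≤ d → ∃ C : ℝ, ∀ σ, ρ σ ≤ C) ∧
      (d = 2 → ∃ C : ℝ, ∀ σ, ρ σ ≤ C * (1 + |Real.log (|σ|⁻¹)|)) ∧
      (∀ ε : ℝ, 0 < ε →
        ∃ c : ℝ, 0 < c ∧ ∀ σ ∈ Set.Icc (-(2 * (d : ℝ)) + ε) (2 * (d : ℝ) - ε), c ≤ ρ σ) :=
  density_of_states_general d (by lia)
end
end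

section
/- Let H = Δ_L + λV on the finite torus ℤ^d_L and let R = (H − z)^{-1}, M̃ = (Δ_L − (z + λ²θ̃))^{-1} where θ̃ = E R_{00}, and let 𝒟[B] = ∑_x B_{xx}|x⟩⟨x| denote the diagonal part. Then the self-consistent equation E R = M̃ (Id + λ² E[𝒟[R − E R] R]) holds exactly, where E denotes expectation over the Gaussian potential V. -/
open MeasureTheory ProbabilityTheory Matrix
open scoped Classical

noncomputable section

noncomputable def gaussPi' {ι : Type*} [Fintype ι] : Measure (ι → ℝ) :=
  Measure.pi fun _ : ι => gaussianReal 0 1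

/-- The nearest-neighbor Laplacian on the finite torus `ℤ^d_L`. -/
noncomputable def torusLap (d L : ℕ) [NeZero L] :
    Matrix (Fin d → ZMod L) (Fin d → ZMod L) ℂ :=
  Matrix.of fun a b =>
    if ∃ j : Fin d, a = b + Pi.single j 1 ∨ b = a + Pi.single j 1 then 1 else 0

/-!
Integrating by parts in each Gaussian coordinate, where `∂R/∂g_x = -λ R|x⟩⟨x|R`, gives
`E[V R] = -λ E[𝒟[R] R]`. Hence the expectation of the identity `(A - z) R + λ V R = 1` is
`(A - z) E R = 1 + λ² E[𝒟[R] R]`, and moving `λ² 𝒟[E R] E R` to the left-hand side gives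
`(A - z - λ² 𝒟[E R]) E R = 1 + λ² E[𝒟[R - E R] R]`. The operator on the left is invertible because
the diagonal of `E R` has imaginary parts of the same sign as `Im z`. When a group of symmetries of
`A` acts transitively on the sites, `𝒟[E R]` is a multiple of the identity.
-/

section GaussianIntegrationByParts

variable {E : Type*} [NormedAddCommGroup E] [NormedSpace ℝ E]

lemma hasDerivAt_gaussianPDFReal (m : ℝ) (v : NNReal) (x : ℝ) :
    HasDerivAt (gaussianPDFReal m v) (-((x - m) / v) * gaussianPDFReal m v x) x := by
  have hexp : HasDerivAt (fun x : ℝ => Real.exp (-(x - m) ^ 2 / (2 * v)))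
      (Real.exp (-(x - m) ^ 2 / (2 * v)) * (-(2 * (x - m)) / (2 * v))) x := by
    simpa using (((((hasDerivAt_id x).sub_const m).pow 2).neg.div_const (2 * (v : ℝ))).exp)
  rw [gaussianPDFReal_def]
  refine (hexp.const_mul _).congr_deriv ?_
  rw [← mul_neg, mul_div_mul_left _ _ two_ne_zero]
  ring

lemma integrable_gaussianReal_iff_integrable_smul (m : ℝ) {v : NNReal} (hv : v ≠ 0) {f : ℝ → E} :
    Integrable f (gaussianReal m v) ↔ Integrable (fun x => gaussianPDFReal m v x • f x) := by
  rw [gaussianReal_of_var_ne_zero _ hv,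
    integrable_withDensity_iff_integrable_smul' (measurable_gaussianPDF m v)
      (.of_forall fun _ => gaussianPDF_lt_top)]
  simp only [toReal_gaussianPDF]

/-- Stein's lemma. -/
theorem integral_sub_smul_gaussianReal (m : ℝ) (v : NNReal) {f f' : ℝ → E}
    (hderiv : ∀ x, HasDerivAt f (f' x) x) (hf : Integrable f (gaussianReal m v))
    (hf' : Integrable f' (gaussianReal m v))
    (hxf : Integrable (fun x => (x - m) • f x) (gaussianReal m v)) :
    ∫ x, (x - m) • f x ∂gaussianReal m v = v • ∫ x, f' x ∂gaussianReal m v := by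
  rcases eq_or_ne v 0 with rfl | hv
  · rw [gaussianReal_zero_var, zero_smul]
    refine integral_eq_zero_of_ae ?_
    rw [ae_dirac_eq]
    exact Filter.eventually_pure.2 (by simp only [sub_self, zero_smul, Pi.zero_apply])
  have hv' : (v : ℝ) ≠ 0 := by exact_mod_cast hv
  have hderiv_mul (x : ℝ) : HasDerivAt (fun x => gaussianPDFReal m v x • f x)
      (gaussianPDFReal m v x • (f' x - (v : ℝ)⁻¹ • (x - m) • f x)) x := by
    refine ((hasDerivAt_gaussianPDFReal m v x).smul (hderiv x)).congr_deriv ?_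
    module
  have hxf' : Integrable (fun x => (v : ℝ)⁻¹ • (x - m) • f x) (gaussianReal m v) := hxf.smul _
  have hzero := integral_eq_zero_of_hasDerivAt_of_integrable hderiv_mul
    ((integrable_gaussianReal_iff_integrable_smul m hv).1 (hf'.sub hxf'))
    ((integrable_gaussianReal_iff_integrable_smul m hv).1 hf)
  rw [← integral_gaussianReal_eq_integral_smul hv, integral_sub hf' hxf', integral_smul,
    sub_eq_zero] at hzero
  rw [hzero, NNReal.smul_def, smul_inv_smul₀ hv']

lemma measurePreserving_update_pi {ι : Type*} [Fintype ι] [DecidableEq ι] {α : ι → Type*}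
    [∀ i, MeasurableSpace (α i)] (μ : ∀ i, Measure (α i)) [∀ i, SigmaFinite (μ i)] (a : ι)
    [IsProbabilityMeasure (μ a)] :
    MeasurePreserving (fun p : (∀ i, α i) × α a => Function.update p.1 a p.2)
      ((Measure.pi μ).prod (μ a)) (Measure.pi μ) := by
  have hmeas : Measurable fun p : (∀ i, α i) × α a => Function.update p.1 a p.2 := by
    fun_prop
  refine ⟨hmeas, (Measure.pi_eq fun s hs => ?_).symm⟩
  have hpre : (fun p : (∀ i, α i) × α a => Function.update p.1 a p.2) ⁻¹' Set.univ.pi s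
      = Set.univ.pi (Function.update s a Set.univ) ×ˢ s a := by
    ext p
    simp only [Set.mem_preimage, Set.mem_univ_pi, Set.mem_prod,
      Function.forall_update_iff p.1 (fun i y => y ∈ s i),
      Function.forall_update_iff s (fun i t => p.1 i ∈ t), Set.mem_univ, true_and]
    exact and_comm
  rw [Measure.map_apply hmeas (MeasurableSet.univ_pi hs), hpre, Measure.prod_prod, Measure.pi_pi,
    Fintype.prod_eq_mul_prod_compl a, Fintype.prod_eq_mul_prod_compl a, Function.update_self,
    measure_univ, one_mul, mul_comm]
  congr 1
  refine Finset.prod_congr rfl fun i hi => ?_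
  rw [Function.update_of_ne (by simpa using hi)]

omit [NormedSpace ℝ E] in
lemma ae_integrable_update_pi {ι : Type*} [Fintype ι] [DecidableEq ι] {α : ι → Type*}
    [∀ i, MeasurableSpace (α i)] (μ : ∀ i, Measure (α i)) [∀ i, SigmaFinite (μ i)] (a : ι)
    [IsProbabilityMeasure (μ a)] {F : (∀ i, α i) → E} (hF : Integrable F (Measure.pi μ)) :
    ∀ᵐ g ∂Measure.pi μ, Integrable (fun t => F (Function.update g a t)) (μ a) :=
  ((measurePreserving_update_pi μ a).integrable_comp_of_integrable hF).prod_right_ae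

lemma integral_integral_update_pi {ι : Type*} [Fintype ι] [DecidableEq ι] {α : ι → Type*}
    [∀ i, MeasurableSpace (α i)] (μ : ∀ i, Measure (α i)) [∀ i, SigmaFinite (μ i)] (a : ι)
    [IsProbabilityMeasure (μ a)] {F : (∀ i, α i) → E} (hF : Integrable F (Measure.pi μ)) :
    ∫ g, ∫ t, F (Function.update g a t) ∂μ a ∂Measure.pi μ = ∫ g, F g ∂Measure.pi μ := by
  have hmp := measurePreserving_update_pi μ a
  calc ∫ g, ∫ t, F (Function.update g a t) ∂μ a ∂Measure.pi μ
      = ∫ p, F (Function.update p.1 a p.2) ∂(Measure.pi μ).prod (μ a) :=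
        (integral_prod _ (hmp.integrable_comp_of_integrable hF)).symm
    _ = ∫ g, F g ∂((Measure.pi μ).prod (μ a)).map fun p => Function.update p.1 a p.2 :=
        (integral_map hmp.aemeasurable (hmp.map_eq.symm ▸ hF.aestronglyMeasurable)).symm
    _ = ∫ g, F g ∂Measure.pi μ := by rw [hmp.map_eq]

variable {ι : Type*} [Fintype ι]

instance : IsProbabilityMeasure (gaussPi' (ι := ι)) := by
  unfold gaussPi'
  infer_instance

lemma measurePreserving_comp_perm_gaussPi' (σ : Equiv.Perm ι) :
    MeasurePreserving (fun g : ι → ℝ => g ∘ σ) gaussPi' gaussPi' :=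
  measurePreserving_arrowCongr' (fun _ => gaussianReal 0 1) (fun _ => gaussianReal 0 1) σ.symm
    (.refl ℝ) fun _ => .id _

theorem integral_coord_smul_gaussPi' [DecidableEq ι] (a : ι)
    {F F' : (ι → ℝ) → E}
    (hderiv : ∀ g, HasDerivAt (fun t => F (Function.update g a t)) (F' g) (g a))
    (hF : Integrable F gaussPi') (hF' : Integrable F' gaussPi')
    (hgF : Integrable (fun g => g a • F g) gaussPi') :
    ∫ g, g a • F g ∂gaussPi' = ∫ g, F' g ∂gaussPi' := by
  unfold gaussPi' at *
  rw [← integral_integral_update_pi _ a hgF, ← integral_integral_update_pi _ a hF']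
  refine integral_congr_ae ?_
  filter_upwards [ae_integrable_update_pi _ a hF, ae_integrable_update_pi _ a hF',
    ae_integrable_update_pi _ a hgF] with g hF_slice hF'_slice hgF_slice
  have hderiv_slice (t : ℝ) :
      HasDerivAt (fun t => F (Function.update g a t)) (F' (Function.update g a t)) t := by
    simpa only [Function.update_idem, Function.update_self] using hderiv (Function.update g a t)
  simpa only [Function.update_self, sub_zero, one_smul] using
    integral_sub_smul_gaussianReal 0 1 hderiv_slice hF_slice hF'_slice
      (by simpa only [Function.update_self, sub_zero] using hgF_slice)

end GaussianIntegrationByParts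

lemma hasDerivAt_ringInverse_comp {𝕜 R : Type*} [NontriviallyNormedField 𝕜] [NormedRing R]
    [HasSummableGeomSeries R] [NormedAlgebra 𝕜 R] {K : 𝕜 → R} {K' : R} {t : 𝕜}
    (hK : HasDerivAt K K' t) (hunit : IsUnit (K t)) :
    HasDerivAt (fun s => Ring.inverse (K s))
      (-(Ring.inverse (K t) * K' * Ring.inverse (K t))) t := by
  obtain ⟨u, hu⟩ := hunit
  have hinv : HasFDerivAt Ring.inverse (-ContinuousLinearMap.mulLeftRight 𝕜 R ↑u⁻¹ ↑u⁻¹) (K t) :=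
    hu ▸ hasFDerivAt_ringInverse u
  refine (hinv.comp_hasDerivAt t hK).congr_deriv ?_
  simp only [← hu, Ring.inverse_unit, _root_.neg_apply, ContinuousLinearMap.mulLeftRight_apply]

section Resolvent

variable {ι : Type*} [Fintype ι] [DecidableEq ι] {H : Matrix ι ι ℂ}

/-- The constant `c` matters only through its sign, which is that of all the imaginary parts. -/
lemma isUnit_sub_diagonal_of_isHermitian (hH : H.IsHermitian) {c : ℝ} {w : ι → ℂ}
    (hw : ∀ i, 0 < c * (w i).im) : IsUnit (H - diagonal w) := by
  rw [isUnit_iff_isUnit_det, isUnit_iff_ne_zero]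
  intro hdet
  obtain ⟨v, hv_ne, hv⟩ := exists_mulVec_eq_zero_iff.mpr hdet
  rw [sub_mulVec, sub_eq_zero] at hv
  have him : ∑ i, (w i).im * Complex.normSq (v i) = 0 := by
    have h := hH.im_star_dotProduct_mulVec_self v
    simp only [hv, dotProduct, Pi.star_apply, mulVec_diagonal] at h
    rw [← h]
    simp only [Complex.normSq_apply, RCLike.star_def, map_sum, RCLike.mul_im, RCLike.mul_re,
      RCLike.conj_re, RCLike.conj_im, RCLike.re_to_complex, RCLike.im_to_complex]
    exact Finset.sum_congr rfl fun i _ => by ring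
  have hnonneg (i : ι) : 0 ≤ c * (w i).im * Complex.normSq (v i) :=
    mul_nonneg (hw i).le (Complex.normSq_nonneg _)
  have hsum : ∑ i, c * (w i).im * Complex.normSq (v i) = 0 := by
    simp only [mul_assoc, ← Finset.mul_sum, him, mul_zero]
  refine hv_ne (funext fun i => Complex.normSq_eq_zero.1 ?_)
  have hi := (Finset.sum_eq_zero_iff_of_nonneg fun i _ => hnonneg i).1 hsum i (Finset.mem_univ i)
  exact (mul_eq_zero.1 hi).resolve_left (hw i).ne'

lemma isUnit_sub_smul_one_of_isHermitian (hH : H.IsHermitian) {z : ℂ} (hz : z.im ≠ 0) :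
    IsUnit (H - z • (1 : Matrix ι ι ℂ)) := by
  rw [smul_one_eq_diagonal]
  exact isUnit_sub_diagonal_of_isHermitian hH fun _ => mul_self_pos.2 hz

/-- The Ward identity. -/
lemma inv_sub_conjTranspose_inv_sub_smul_one (hH : H.IsHermitian) {z : ℂ} (hz : z.im ≠ 0) :
    (H - z • (1 : Matrix ι ι ℂ))⁻¹ - ((H - z • (1 : Matrix ι ι ℂ))⁻¹)ᴴ
      = (z - star z) • ((H - z • (1 : Matrix ι ι ℂ))⁻¹ * ((H - z • (1 : Matrix ι ι ℂ))⁻¹)ᴴ) := by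
  have hunit := isUnit_sub_smul_one_of_isHermitian hH hz
  have hdiff : (H - z • (1 : Matrix ι ι ℂ))ᴴ - (H - z • (1 : Matrix ι ι ℂ))
      = (z - star z) • (1 : Matrix ι ι ℂ) := by
    rw [conjTranspose_sub, hH.eq, conjTranspose_smul, conjTranspose_one]
    module
  set K := H - z • (1 : Matrix ι ι ℂ)
  rw [conjTranspose_nonsing_inv, Matrix.inv_sub_inv (by simp only [hunit, isUnit_conjTranspose]),
    hdiff, mul_smul_comm, mul_one, smul_mul_assoc]

open scoped Matrix.Norms.L2Operator in
lemma norm_inv_sub_smul_one_le (hH : H.IsHermitian) {z : ℂ} (hz : z.im ≠ 0) :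
    ‖(H - z • (1 : Matrix ι ι ℂ))⁻¹‖ ≤ |z.im|⁻¹ := by
  have hward := inv_sub_conjTranspose_inv_sub_smul_one hH hz
  set R := (H - z • (1 : Matrix ι ι ℂ))⁻¹
  have hzz : ‖z - star z‖ = 2 * |z.im| := by simp [Complex.sub_conj]
  have hsq : 2 * |z.im| * (‖R‖ * ‖R‖) ≤ 2 * ‖R‖ :=
    calc 2 * |z.im| * (‖R‖ * ‖R‖) = ‖R - Rᴴ‖ := by
          rw [hward, norm_smul, hzz, ← star_eq_conjTranspose, CStarRing.norm_self_mul_star]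
      _ ≤ ‖R‖ + ‖Rᴴ‖ := norm_sub_le _ _
      _ = 2 * ‖R‖ := by rw [l2_opNorm_conjTranspose, two_mul]
  rcases (norm_nonneg R).eq_or_lt with hR | hR
  · rw [← hR]
    positivity
  · rw [← one_div, le_div_iff₀ (abs_pos.2 hz)]
    exact le_of_mul_le_mul_right (by linarith) hR

lemma im_mul_im_inv_sub_smul_one_apply_self_nonneg (hH : H.IsHermitian) {z : ℂ} (hz : z.im ≠ 0)
    (i : ι) : 0 ≤ z.im * ((H - z • (1 : Matrix ι ι ℂ))⁻¹ i i).im := by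
  have hward := congr_fun₂ (inv_sub_conjTranspose_inv_sub_smul_one hH hz) i i
  set R := (H - z • (1 : Matrix ι ι ℂ))⁻¹
  have hpos : 0 ≤ ((R * Rᴴ) i i).re := by
    open ComplexOrder in
    exact (Complex.le_def.1 (posSemidef_self_mul_conjTranspose R).diag_nonneg).1
  have him : (R i i).im = z.im * ((R * Rᴴ) i i).re := by
    have := congr_arg Complex.im hward
    simp only [Matrix.sub_apply, conjTranspose_apply, RCLike.star_def, Complex.sub_im,
      Complex.conj_im, Matrix.smul_apply, smul_eq_mul, Complex.mul_im, Complex.sub_re,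
      Complex.conj_re, sub_self, zero_mul] at this
    linarith
  rw [him, ← mul_assoc]
  exact mul_nonneg (mul_self_nonneg _) hpos

end Resolvent

section RandomResolvent

open scoped Matrix.Norms.L2Operator

variable {ι : Type*} [Fintype ι] [DecidableEq ι] {A : Matrix ι ι ℂ}

/-- The random Schrödinger operator `A + λV`, where the potential `V` is the multiplication
operator by `g`. -/
def randomHamiltonian (A : Matrix ι ι ℂ) (lam : ℝ) (g : ι → ℝ) : Matrix ι ι ℂ :=
  A + (lam : ℂ) • diagonal fun i => (g i : ℂ)

/-- The resolvent `R = (A + λV - z)⁻¹` as a function of the potential. -/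
def randomResolvent (A : Matrix ι ι ℂ) (lam : ℝ) (z : ℂ) (g : ι → ℝ) : Matrix ι ι ℂ :=
  (randomHamiltonian A lam g - z • (1 : Matrix ι ι ℂ))⁻¹

omit [Fintype ι] in
lemma isHermitian_randomHamiltonian (hA : A.IsHermitian) (lam : ℝ) (g : ι → ℝ) :
    (randomHamiltonian A lam g).IsHermitian := by
  have hV : (diagonal fun i => (g i : ℂ)).IsHermitian :=
    isHermitian_diagonal_of_self_adjoint _ (funext fun i => Complex.conj_ofReal (g i))
  exact hA.add (hV.smul (Complex.conj_ofReal lam))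

omit [Fintype ι] in
lemma randomHamiltonian_update (A : Matrix ι ι ℂ) (lam : ℝ) (g : ι → ℝ) (x : ι) (t : ℝ) :
    randomHamiltonian A lam (Function.update g x t)
      = randomHamiltonian A lam g + (t - g x) • (lam : ℂ) • single x x (1 : ℂ) := by
  ext i j
  rcases eq_or_ne i j with rfl | hij
  · rcases eq_or_ne i x with rfl | hix
    · simp only [randomHamiltonian, Matrix.add_apply, Matrix.smul_apply, diagonal_apply_eq,
        Function.update_self, Complex.real_smul, smul_single, smul_eq_mul, mul_one,
        Complex.coe_smul, Complex.ofReal_sub, single_apply_same]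
      ring
    · simp [randomHamiltonian, hix, hix.symm]
  · have : ¬ (x = i ∧ x = j) := by grind
    simp [randomHamiltonian, hij, this]

variable {lam : ℝ} {z : ℂ} (hA : A.IsHermitian) (hz : z.im ≠ 0)

include hA hz

lemma isUnit_randomHamiltonian_sub (g : ι → ℝ) :
    IsUnit (randomHamiltonian A lam g - z • (1 : Matrix ι ι ℂ)) :=
  isUnit_sub_smul_one_of_isHermitian (isHermitian_randomHamiltonian hA lam g) hz

lemma randomHamiltonian_sub_mul_randomResolvent (g : ι → ℝ) :
    (randomHamiltonian A lam g - z • (1 : Matrix ι ι ℂ)) * randomResolvent A lam z g = 1 :=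
  mul_nonsing_inv _ ((isUnit_iff_isUnit_det _).1 (isUnit_randomHamiltonian_sub hA hz g))

lemma norm_randomResolvent_le (g : ι → ℝ) : ‖randomResolvent A lam z g‖ ≤ |z.im|⁻¹ :=
  norm_inv_sub_smul_one_le (isHermitian_randomHamiltonian hA lam g) hz

lemma continuous_randomResolvent : Continuous (randomResolvent A lam z) := by
  have hcont : Continuous fun g => randomHamiltonian A lam g - z • (1 : Matrix ι ι ℂ) := by
    unfold randomHamiltonian
    fun_prop
  refine continuous_iff_continuousAt.2 fun g =>
    (continuousAt_matrix_inv _ ?_).comp hcont.continuousAt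
  have hunit := (isUnit_iff_isUnit_det _).1 (isUnit_randomHamiltonian_sub (lam := lam) hA hz g)
  simpa only [Ring.inverse_eq_inv'] using continuousAt_inv₀ hunit.ne_zero

lemma hasDerivAt_randomResolvent_update (x : ι) (g : ι → ℝ) :
    HasDerivAt (fun t => randomResolvent A lam z (Function.update g x t))
      (-((lam : ℂ) • (randomResolvent A lam z g * single x x 1 * randomResolvent A lam z g)))
      (g x) := by
  have hH : HasDerivAt
      (fun t => randomHamiltonian A lam (Function.update g x t) - z • (1 : Matrix ι ι ℂ))
      ((lam : ℂ) • single x x (1 : ℂ)) (g x) := by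
    simp only [randomHamiltonian_update]
    exact ((((hasDerivAt_id (g x)).sub_const (g x)).smul_const ((lam : ℂ) • single x x (1 : ℂ))
      |>.const_add (randomHamiltonian A lam g)).sub_const (z • 1)).congr_deriv (one_smul ℝ _)
  simpa only [randomResolvent, nonsing_inv_eq_ringInverse, Function.update_eq_self, mul_smul_comm,
    smul_mul_assoc] using hasDerivAt_ringInverse_comp hH (isUnit_randomHamiltonian_sub hA hz _)

lemma integrable_randomResolvent : Integrable (randomResolvent A lam z) gaussPi' :=
  .of_bound (continuous_randomResolvent hA hz).aestronglyMeasurable _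
    (.of_forall (norm_randomResolvent_le hA hz))

lemma integrable_mul_randomResolvent {F : (ι → ℝ) → Matrix ι ι ℂ} (hF : Integrable F gaussPi') :
    Integrable (fun g => F g * randomResolvent A lam z g) gaussPi' :=
  hF.mul_bdd (continuous_randomResolvent hA hz).aestronglyMeasurable
    (.of_forall (norm_randomResolvent_le hA hz))

lemma integrable_coord_smul_randomResolvent (x : ι) :
    Integrable (fun g => g x • randomResolvent A lam z g) gaussPi' := by
  have hcoord : Integrable (fun g : ι → ℝ => g x) gaussPi' :=
    (measurePreserving_eval (fun _ : ι => gaussianReal 0 1) x).integrable_comp_of_integrable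
      (memLp_id_gaussianReal 1 |>.integrable le_rfl)
  exact hcoord.smul_bdd _ (continuous_randomResolvent hA hz).aestronglyMeasurable
    (.of_forall (norm_randomResolvent_le hA hz))

theorem integral_coord_smul_randomResolvent (x : ι) :
    ∫ g, g x • randomResolvent A lam z g ∂gaussPi'
      = -((lam : ℂ) • ∫ g, randomResolvent A lam z g * single x x 1 * randomResolvent A lam z g
          ∂gaussPi') := by
  have hint : Integrable
      (fun g => randomResolvent A lam z g * single x x 1 * randomResolvent A lam z g) gaussPi' :=
    integrable_mul_randomResolvent hA hz ((integrable_randomResolvent hA hz).mul_const _)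
  rw [integral_coord_smul_gaussPi' x (hasDerivAt_randomResolvent_update hA hz x)
    (integrable_randomResolvent hA hz) (hint.smul (lam : ℂ)).neg
    (integrable_coord_smul_randomResolvent hA hz x), integral_neg, integral_smul]

end RandomResolvent

section SelfConsistentEquation

open scoped Matrix.Norms.L2Operator

lemma integral_matrix_apply {Ω m n : Type*} [MeasurableSpace Ω] {μ : Measure Ω} [Fintype m]
    [Fintype n] [DecidableEq n] {F : Ω → Matrix m n ℂ} (hF : Integrable F μ) (a : m) (b : n) :
    (∫ ω, F ω ∂μ) a b = ∫ ω, F ω a b ∂μ :=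
  ((entryLinearMap ℂ ℂ a b).toContinuousLinearMap.integral_comp_comm hF).symm

variable {ι : Type*} [Fintype ι] [DecidableEq ι]

lemma diagonal_mul_eq_sum {R : Type*} [Semiring R] (v : ι → R) (M : Matrix ι ι R) :
    diagonal v * M = ∑ x, single x x (v x) * M := by
  rw [← sum_single_eq_diagonal, Finset.sum_mul]

lemma diagonal_ofReal_mul_eq_sum (g : ι → ℝ) (M : Matrix ι ι ℂ) :
    (diagonal fun i => (g i : ℂ)) * M = ∑ x, single x x 1 * (g x • M) := by
  simp only [diagonal_mul_eq_sum, mul_smul_comm, ← smul_mul_assoc, smul_single, Complex.real_smul,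
    mul_one]

variable {A : Matrix ι ι ℂ} {lam : ℝ} {z : ℂ} (hA : A.IsHermitian) (hz : z.im ≠ 0)

include hA hz

lemma integrable_diagonal_diag_sub_mul_randomResolvent (B : Matrix ι ι ℂ) :
    Integrable (fun g => diagonal (randomResolvent A lam z g - B).diag * randomResolvent A lam z g)
      gaussPi' := by
  have hsub : Integrable (fun g => randomResolvent A lam z g - B) gaussPi' :=
    (integrable_randomResolvent hA hz).sub (integrable_const B)
  exact integrable_mul_randomResolvent hA hz
    ((diagonalLinearMap ι ℂ ℂ ∘ₗ diagLinearMap ι ℂ ℂ).toContinuousLinearMap.integrable_comp hsub)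

lemma integrable_potential_mul_randomResolvent :
    Integrable (fun g => (diagonal fun i => (g i : ℂ)) * randomResolvent A lam z g) gaussPi' := by
  simp only [diagonal_ofReal_mul_eq_sum]
  exact integrable_finsetSum _ fun x _ =>
    (integrable_coord_smul_randomResolvent hA hz x).const_mul _

theorem integral_potential_mul_randomResolvent :
    ∫ g, (diagonal fun i => (g i : ℂ)) * randomResolvent A lam z g ∂gaussPi'
      = -((lam : ℂ) • ∫ g, diagonal (randomResolvent A lam z g).diag * randomResolvent A lam z g
          ∂gaussPi') := by
  set R := randomResolvent A lam z
  have hdiag (g : ι → ℝ) :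
      diagonal (R g).diag * R g = ∑ x, single x x 1 * (R g * single x x 1 * R g) := by
    simp only [diagonal_mul_eq_sum, ← mul_assoc, single_mul_mul_single, diag_apply, one_mul,
      mul_one]
  have hRR (x : ι) : Integrable (fun g => R g * single x x 1 * R g) gaussPi' :=
    integrable_mul_randomResolvent hA hz ((integrable_randomResolvent hA hz).mul_const _)
  have hgR := integrable_coord_smul_randomResolvent (lam := lam) hA hz
  simp only [diagonal_ofReal_mul_eq_sum, hdiag]
  rw [integral_finsetSum _ fun x _ => (hgR x).const_mul _,
    integral_finsetSum _ fun x _ => (hRR x).const_mul _, Finset.smul_sum, ← Finset.sum_neg_distrib]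
  refine Finset.sum_congr rfl fun x _ => ?_
  rw [integral_const_mul_of_integrable (hgR x), integral_const_mul_of_integrable (hRR x),
    integral_coord_smul_randomResolvent hA hz, mul_neg, mul_smul_comm]

theorem sub_smul_one_mul_integral_randomResolvent :
    (A - z • (1 : Matrix ι ι ℂ)) * ∫ g, randomResolvent A lam z g ∂gaussPi'
      = 1 + (lam : ℂ) ^ 2 •
          ∫ g, diagonal (randomResolvent A lam z g).diag * randomResolvent A lam z g ∂gaussPi' := by
  have hpointwise (g : ι → ℝ) : (A - z • (1 : Matrix ι ι ℂ)) * randomResolvent A lam z g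
      = 1 - (lam : ℂ) • ((diagonal fun i => (g i : ℂ)) * randomResolvent A lam z g) := by
    rw [eq_sub_iff_add_eq, ← smul_mul_assoc, ← add_mul, ← add_sub_right_comm]
    exact randomHamiltonian_sub_mul_randomResolvent hA hz g
  have hpotential : Integrable
      (fun g => (lam : ℂ) • ((diagonal fun i => (g i : ℂ)) * randomResolvent A lam z g))
      gaussPi' := (integrable_potential_mul_randomResolvent hA hz).smul (lam : ℂ)
  rw [← integral_const_mul_of_integrable (integrable_randomResolvent hA hz)]
  simp only [hpointwise]
  rw [integral_sub (integrable_const _) hpotential, integral_smul,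
    integral_potential_mul_randomResolvent hA hz, integral_const, probReal_univ, one_smul]
  module

lemma integral_diagonal_diag_sub_mul_randomResolvent (B : Matrix ι ι ℂ) :
    ∫ g, diagonal (randomResolvent A lam z g - B).diag * randomResolvent A lam z g ∂gaussPi'
      = ∫ g, diagonal (randomResolvent A lam z g).diag * randomResolvent A lam z g ∂gaussPi'
        - diagonal B.diag * ∫ g, randomResolvent A lam z g ∂gaussPi' := by
  have hR := (integrable_randomResolvent (lam := lam) hA hz).const_mul (diagonal B.diag)
  rw [eq_sub_iff_add_eq, ← integral_const_mul_of_integrable (integrable_randomResolvent hA hz),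
    ← integral_add (integrable_diagonal_diag_sub_mul_randomResolvent hA hz B) hR]
  simp only [← add_mul, diagonal_add, diag_sub, Pi.sub_apply, sub_add_cancel]

lemma im_mul_im_integral_randomResolvent_apply_self_nonneg (i : ι) :
    0 ≤ z.im * ((∫ g, randomResolvent A lam z g ∂gaussPi') i i).im := by
  have hR := integrable_randomResolvent (lam := lam) hA hz
  have hRi := (entryLinearMap ℂ ℂ i i).toContinuousLinearMap.integrable_comp hR
  have him : (∫ g, randomResolvent A lam z g i i ∂gaussPi').im
      = ∫ g, (randomResolvent A lam z g i i).im ∂gaussPi' := (integral_im hRi).symm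
  rw [integral_matrix_apply hR, him, ← integral_const_mul]
  exact integral_nonneg fun g =>
    im_mul_im_inv_sub_smul_one_apply_self_nonneg (isHermitian_randomHamiltonian hA lam g) hz i

theorem integral_randomResolvent_eq_inv_mul :
    ∫ g, randomResolvent A lam z g ∂gaussPi'
      = (A - diagonal fun x => z + (lam : ℂ) ^ 2 * (∫ g, randomResolvent A lam z g ∂gaussPi') x x)⁻¹
        * (1 + (lam : ℂ) ^ 2 • ∫ g, diagonal
            (randomResolvent A lam z g - ∫ g', randomResolvent A lam z g' ∂gaussPi').diag
              * randomResolvent A lam z g ∂gaussPi') := by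
  have hmean := sub_smul_one_mul_integral_randomResolvent (lam := lam) hA hz
  have hfluct := integral_diagonal_diag_sub_mul_randomResolvent (lam := lam) hA hz
  have hsign := im_mul_im_integral_randomResolvent_apply_self_nonneg (lam := lam) hA hz
  set ER := ∫ g, randomResolvent A lam z g ∂gaussPi'
  have hshift : (diagonal fun x => z + (lam : ℂ) ^ 2 * ER x x)
      = z • (1 : Matrix ι ι ℂ) + (lam : ℂ) ^ 2 • diagonal ER.diag := by
    rw [smul_one_eq_diagonal, ← diagonal_smul, diagonal_add]
    rfl
  have hunit : IsUnit (A - diagonal fun x => z + (lam : ℂ) ^ 2 * ER x x) := by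
    refine isUnit_sub_diagonal_of_isHermitian hA (c := z.im) fun x => ?_
    rw [Complex.add_im, ← Complex.ofReal_pow, Complex.im_ofReal_mul, mul_add, mul_left_comm]
    exact add_pos_of_pos_of_nonneg (mul_self_pos.2 hz) (mul_nonneg (sq_nonneg lam) (hsign x))
  have hshifted : (A - diagonal fun x => z + (lam : ℂ) ^ 2 * ER x x) * ER
      = 1 + (lam : ℂ) ^ 2 • ∫ g, diagonal (randomResolvent A lam z g - ER).diag
          * randomResolvent A lam z g ∂gaussPi' := by
    rw [hshift, ← sub_sub, sub_mul, hmean, hfluct, smul_mul_assoc, smul_sub, add_sub_assoc]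
  rw [← hshifted, nonsing_inv_mul_cancel_left _ _ ((isUnit_iff_isUnit_det _).1 hunit)]

omit [Fintype ι] hA hz in
lemma randomHamiltonian_comp_perm {σ : Equiv.Perm ι} (hσ : A.submatrix σ σ = A) (g : ι → ℝ) :
    randomHamiltonian A lam (g ∘ σ) = (randomHamiltonian A lam g).submatrix σ σ := by
  have hV : diagonal (fun i => ((g ∘ σ) i : ℂ)) = (diagonal fun i => (g i : ℂ)).submatrix σ σ :=
    (submatrix_diagonal_equiv (fun i => (g i : ℂ)) σ).symm
  nth_rw 1 [← hσ]
  rw [randomHamiltonian, hV]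
  rfl

omit hA hz in
lemma randomResolvent_comp_perm {σ : Equiv.Perm ι} (hσ : A.submatrix σ σ = A) (g : ι → ℝ) :
    randomResolvent A lam z (g ∘ σ) = (randomResolvent A lam z g).submatrix σ σ := by
  have hone : (1 : Matrix ι ι ℂ).submatrix σ σ = 1 := submatrix_one_equiv σ
  rw [randomResolvent, randomResolvent, ← inv_submatrix_equiv, randomHamiltonian_comp_perm hσ]
  nth_rw 1 [← hone]
  rfl

lemma integral_randomResolvent_apply_perm {σ : Equiv.Perm ι} (hσ : A.submatrix σ σ = A) (a b : ι) :
    (∫ g, randomResolvent A lam z g ∂gaussPi') (σ a) (σ b)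
      = (∫ g, randomResolvent A lam z g ∂gaussPi') a b := by
  have hR := integrable_randomResolvent (lam := lam) hA hz
  rw [integral_matrix_apply hR, integral_matrix_apply hR]
  have hmp := measurePreserving_comp_perm_gaussPi' σ
  have hRab := (entryLinearMap ℂ ℂ a b).toContinuousLinearMap.integrable_comp hR
  calc ∫ g, randomResolvent A lam z g (σ a) (σ b) ∂gaussPi'
      = ∫ g, randomResolvent A lam z (g ∘ σ) a b ∂gaussPi' := by
        simp only [randomResolvent_comp_perm hσ, submatrix_apply]
    _ = ∫ g, randomResolvent A lam z g a b ∂gaussPi'.map fun g => g ∘ σ :=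
        (integral_map hmp.aemeasurable (hmp.map_eq.symm ▸ hRab.aestronglyMeasurable)).symm
    _ = ∫ g, randomResolvent A lam z g a b ∂gaussPi' := by rw [hmp.map_eq]

theorem self_consistent_equation_general (o : ι)
    (hsymm : ∀ x, ∃ σ : Equiv.Perm ι, A.submatrix σ σ = A ∧ σ o = x) :
    let R := randomResolvent A lam z
    let ER : Matrix ι ι ℂ := Matrix.of fun a b => ∫ g, R g a b ∂gaussPi'
    let Mt : Matrix ι ι ℂ := (A - (z + (lam : ℂ) ^ 2 * ER o o) • (1 : Matrix ι ι ℂ))⁻¹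
    let Err : Matrix ι ι ℂ := Matrix.of fun a b =>
      ∫ g, ((Matrix.diagonal fun x => R g x x - ER x x) * R g) a b ∂gaussPi'
    ER = Mt * ((1 : Matrix ι ι ℂ) + (lam : ℂ) ^ 2 • Err) := by
  intro R ER Mt Err
  have hER : ER = ∫ g, R g ∂gaussPi' := by
    ext a b
    exact (integral_matrix_apply (integrable_randomResolvent hA hz) a b).symm
  have hErr : Err = ∫ g, diagonal (R g - ER).diag * R g ∂gaussPi' := by
    ext a b
    exact (integral_matrix_apply
      (integrable_diagonal_diag_sub_mul_randomResolvent hA hz ER) a b).symm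
  have hdiag (x : ι) : ER x x = ER o o := by
    obtain ⟨σ, hσ, rfl⟩ := hsymm x
    rw [hER]
    exact integral_randomResolvent_apply_perm hA hz hσ o o
  have hMt : Mt = (A - diagonal fun x => z + (lam : ℂ) ^ 2 * ER x x)⁻¹ := by
    simp only [Mt, hdiag, smul_one_eq_diagonal]
  rw [hMt, hErr, hER]
  exact integral_randomResolvent_eq_inv_mul hA hz

end SelfConsistentEquation

lemma isHermitian_torusLap (d L : ℕ) [NeZero L] : (torusLap d L).IsHermitian := by
  ext a b
  simp only [conjTranspose_apply, torusLap, of_apply, or_comm (a := b = _), apply_ite star,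
    star_one, star_zero]

lemma torusLap_submatrix_addRight (d L : ℕ) [NeZero L] (x : Fin d → ZMod L) :
    (torusLap d L).submatrix (Equiv.addRight x) (Equiv.addRight x) = torusLap d L := by
  ext a b
  simp only [submatrix_apply, torusLap, of_apply, Equiv.coe_addRight, add_right_comm _ x,
    add_left_inj]

/-- **The self-consistent equation for `E R`.**  With `H = Δ_L + λV`, `R = (H-z)⁻¹`,
`θ̃ = E R_{00}`, `M̃ = (Δ_L - (z+λ²θ̃))⁻¹`, and `𝒟` the diagonal-part superoperator:
`E R = M̃ (Id + λ² E[𝒟[R - E R] R])` exactly. -/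
theorem self_consistent_equation (d L : ℕ) [NeZero L]
    (lam : ℝ) (hlam : 0 < lam) (z : ℂ) (hz : 0 < z.im) :
    let R : ((Fin d → ZMod L) → ℝ) → Matrix (Fin d → ZMod L) (Fin d → ZMod L) ℂ :=
      fun g => (torusLap d L + (lam : ℂ) • Matrix.diagonal (fun i => ((g i : ℝ) : ℂ))
        - z • (1 : Matrix (Fin d → ZMod L) (Fin d → ZMod L) ℂ))⁻¹
    let ER : Matrix (Fin d → ZMod L) (Fin d → ZMod L) ℂ :=
      Matrix.of fun a b => ∫ g, R g a b ∂(gaussPi' (ι := (Fin d → ZMod L)))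
    let Mt : Matrix (Fin d → ZMod L) (Fin d → ZMod L) ℂ :=
      (torusLap d L - (z + (lam : ℂ) ^ 2 * ER 0 0)
          • (1 : Matrix (Fin d → ZMod L) (Fin d → ZMod L) ℂ))⁻¹
    let Err : Matrix (Fin d → ZMod L) (Fin d → ZMod L) ℂ :=
      Matrix.of fun a b =>
        ∫ g, ((Matrix.diagonal fun x => R g x x - ER x x) * R g) a b
          ∂(gaussPi' (ι := (Fin d → ZMod L)))
    ER = Mt * ((1 : Matrix (Fin d → ZMod L) (Fin d → ZMod L) ℂ) + (lam : ℂ) ^ 2 • Err) :=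
  self_consistent_equation_general (isHermitian_torusLap d L) hz.ne' 0
    fun x => ⟨Equiv.addRight x, torusLap_submatrix_addRight d L x, zero_add x⟩
end
end
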